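/- Let n, k ≥ 1 and let J = J_n be the 2n×2n matrix with block form ((O, I_n), (−I_n, O)). For every σ ∈ S_{2k}, Σ_{p_1,…,p_{2k} ∈ {1,…,2n}} Π_{r=1}^k J_{p_{σ(2r−1)}, p_{σ(2r)}} · J_{p_{2r−1}, p_{2r}} = (−1)^{k − c(σ)} ε(σ) (2n)^{c(σ)}. -/

import Mathlib

/-!
Row `p` of `J` has a single nonzero entry, in column `partner p`, with value `rowSign p = ±1`,
and `rowSign (partner p) = -rowSign p`. So only tuples `p` with `p w = partner (p v)` along every
edge `v w` of `Γ(σ)` contribute. The proof has two parts.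

* Counting. `Γ(σ)` is a union of two perfect matchings, hence bipartite (`exists_coloring`): for the
  two matching involutions `τ`, `ρ`, the points `v` and `τ v` never lie in the same orbit of `τ * ρ`
  (`not_sameCycle`). Hence a contributing tuple amounts to one free index per component, and there
  are `(2n) ^ c(σ)` of them (`card_valid`).

* Sign. Every contributing term equals `(-1) ^ (k - c(σ)) * ε(σ)` (`prod_coloring`). Indeed,
  `χ = rowSign ∘ p` changes sign along each edge, and the term is `∏ χ(σ(lo r)) χ(lo r)`. This is
  the sign of the two products of transpositions that put the positive point of each pair first,
  on the source and on the target side. After this reordering `σ` preserves first and second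
  points of pairs, so it becomes a pair of permutations `f₀`, `f₁` of `Fin k`; the components of
  `Γ(σ)` are the orbits of `f₁ f₀⁻¹`, whose sign is `(-1) ^ (k - number of orbits)`
  (`sign_eq_orbits`).
-/

/-!
Weingarten calculus for classical compact Lie groups and compact symmetric spaces
(S. Matsumoto, "Weingarten calculus for matrix ensembles associated with compact
symmetric spaces"): common definitions.

We index `{1,…,m}` by `Fin m` (0-indexed), so the pair `{2r-1, 2r}` becomes
`{2r, 2r+1}` for `r ∈ Fin k`.
-/

open MeasureTheory Finset Matrix

namespace WgPaper

/-- `lo r` is the (0-indexed) point `2r`, i.e. `2r - 1` in 1-indexed notation. -/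
def lo {k : ℕ} (i : Fin k) : Fin (2 * k) := ⟨2 * (i : ℕ), by have := i.isLt; omega⟩

/-- `hi r` is the (0-indexed) point `2r + 1`, i.e. `2r` in 1-indexed notation. -/
def hi {k : ℕ} (i : Fin k) : Fin (2 * k) := ⟨2 * (i : ℕ) + 1, by have := i.isLt; omega⟩

/-- Number of cycles of a permutation, counting fixed points as 1-cycles. -/
def cyc {m : ℕ} (σ : Equiv.Perm (Fin m)) : ℕ :=
  Multiset.card σ.cycleType + (Finset.univ.filter fun x => σ x = x).card

/-- Number of even-length cycles of a permutation. -/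
def evenCycles {m : ℕ} (σ : Equiv.Perm (Fin m)) : ℕ :=
  Multiset.card (σ.cycleType.filter fun d => d % 2 = 0)

/-- Number of odd-length cycles of a permutation, counting fixed points as 1-cycles. -/
def oddCycles {m : ℕ} (σ : Equiv.Perm (Fin m)) : ℕ :=
  Multiset.card (σ.cycleType.filter fun d => d % 2 = 1)
    + (Finset.univ.filter fun x => σ x = x).card

/-- The sign `ε(σ)` of a permutation, as an element of a commutative ring. -/
def sgn (R : Type*) [CommRing R] {m : ℕ} (σ : Equiv.Perm (Fin m)) : R :=
  ((Equiv.Perm.sign σ : ℤ) : R)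

/-- Full convolution on a finite group: `(f * g)(σ) = ∑_τ f(τ) g(τ⁻¹ σ)`. -/
def conv {G : Type*} [Group G] [Fintype G] {R : Type*} [CommRing R] (f g : G → R) : G → R :=
  fun σ => ∑ τ : G, f τ * g (τ⁻¹ * σ)

/-- The Dirac function at the identity permutation. -/
def deltaId {m : ℕ} {R : Type*} [CommRing R] : Equiv.Perm (Fin m) → R :=
  fun σ => if σ = 1 then 1 else 0

/-- The graph `Γ(σ)` on `{1,…,2k}` whose edges are `{2r-1, 2r}` and `{σ(2r-1), σ(2r)}`
(in 1-indexed notation) for `1 ≤ r ≤ k`. -/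
def Gamma {k : ℕ} (σ : Equiv.Perm (Fin (2 * k))) : SimpleGraph (Fin (2 * k)) :=
  SimpleGraph.fromRel fun a b =>
    (∃ r : Fin k, a = lo r ∧ b = hi r) ∨ ∃ r : Fin k, a = σ (lo r) ∧ b = σ (hi r)

/-- `c(σ)`, the number of connected components of `Γ(σ)`. -/
noncomputable def ccount {k : ℕ} (σ : Equiv.Perm (Fin (2 * k))) : ℕ :=
  Nat.card (Gamma σ).ConnectedComponent

/-- The number of vertices of a connected component of a graph. -/
noncomputable def compSize {V : Type*} {G : SimpleGraph V} (C : G.ConnectedComponent) : ℕ :=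
  Nat.card {v // G.connectedComponentMk v = C}

/-- `ℓe(σ)`: the number of connected components of `Γ(σ)` whose size is `≡ 0 (mod 4)`. -/
noncomputable def ecomp {k : ℕ} (σ : Equiv.Perm (Fin (2 * k))) : ℕ :=
  Nat.card {C : (Gamma σ).ConnectedComponent // compSize C % 4 = 0}

/-- `ℓo(σ)`: the number of connected components of `Γ(σ)` whose size is `≡ 2 (mod 4)`. -/
noncomputable def ocomp {k : ℕ} (σ : Equiv.Perm (Fin (2 * k))) : ℕ :=
  Nat.card {C : (Gamma σ).ConnectedComponent // compSize C % 4 = 2}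

/-- Membership in the hyperoctahedral subgroup `H_k ≤ S_{2k}`: each pair
`{2i-1, 2i}` is mapped onto some pair `{2j-1, 2j}`. -/
def IsHyper {k : ℕ} (ζ : Equiv.Perm (Fin (2 * k))) : Prop :=
  ∀ i : Fin k, ∃ j : Fin k, ({ζ (lo i), ζ (hi i)} : Finset (Fin (2 * k))) = {lo j, hi j}

/-- The defining property of the set `M_{2k}` of coset representatives of `S_{2k}/H_k`:
`σ(2i-1) < σ(2i)` for all `i` and `σ(1) < σ(3) < ⋯ < σ(2k-1)`. -/
def MProp {k : ℕ} (σ : Equiv.Perm (Fin (2 * k))) : Prop :=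
  (∀ i : Fin k, σ (lo i) < σ (hi i)) ∧ ∀ i j : Fin k, i < j → σ (lo i) < σ (lo j)

open scoped Classical in
/-- The set `M_{2k}` of coset representatives of `S_{2k}/H_k`, as a `Finset`. -/
noncomputable def Mset (k : ℕ) : Finset (Equiv.Perm (Fin (2 * k))) :=
  Finset.univ.filter MProp

/-- Reduced convolution: `(f ⋆ g)(σ) = ∑_{τ ∈ M_{2k}} f(τ) g(τ⁻¹ σ)`. -/
noncomputable def sconv {k : ℕ} {R : Type*} [CommRing R]
    (f g : Equiv.Perm (Fin (2 * k)) → R) : Equiv.Perm (Fin (2 * k)) → R :=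
  fun σ => ∑ τ ∈ Mset k, f τ * g (τ⁻¹ * σ)

open scoped Classical in
/-- The indicator function `1_k` of `H_k`. -/
noncomputable def oneH {k : ℕ} {R : Type*} [CommRing R] : Equiv.Perm (Fin (2 * k)) → R :=
  fun σ => if IsHyper σ then 1 else 0

open scoped Classical in
/-- The twisted indicator function `1_k^ε` of `H_k`: `σ ↦ ε(σ)` on `H_k`, `0` elsewhere. -/
noncomputable def oneHeps {k : ℕ} {R : Type*} [CommRing R] : Equiv.Perm (Fin (2 * k)) → R :=
  fun σ => if IsHyper σ then sgn R σ else 0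

/-- `δ_σ(i,j) = ∏_{s=1}^k δ_{i_{σ(s)}, j_s}`. -/
def deltaP {k : ℕ} {α : Type*} [DecidableEq α] {R : Type*} [CommRing R]
    (σ : Equiv.Perm (Fin k)) (i j : Fin k → α) : R :=
  ∏ s : Fin k, if i (σ s) = j s then 1 else 0

/-- `Δ_σ(i) = ∏_{s=1}^k δ_{i_{σ(2s-1)}, i_{σ(2s)}}`. -/
def DeltaO {k : ℕ} {α : Type*} [DecidableEq α] {R : Type*} [CommRing R]
    (σ : Equiv.Perm (Fin (2 * k))) (i : Fin (2 * k) → α) : R :=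
  ∏ s : Fin k, if i (σ (lo s)) = i (σ (hi s)) then 1 else 0

/-- The standard skew-symmetric matrix `J_n = ((O, I_n), (−I_n, O))`. -/
def Jmat (R : Type*) [CommRing R] (n : ℕ) : Matrix (Fin (2 * n)) (Fin (2 * n)) R :=
  Matrix.of fun p q =>
    if (p : ℕ) + n = (q : ℕ) then 1 else if (q : ℕ) + n = (p : ℕ) then -1 else 0

/-- `Δ'_σ(i) = ∏_{r=1}^k ⟨i_{σ(2r-1)}, i_{σ(2r)}⟩`, where `⟨p,q⟩` is the `(p,q)` entry
of `J_n`. -/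
def DeltaSp {k n : ℕ} (R : Type*) [CommRing R]
    (σ : Equiv.Perm (Fin (2 * k))) (i : Fin (2 * k) → Fin (2 * n)) : R :=
  ∏ s : Fin k, Jmat R n (i (σ (lo s))) (i (σ (hi s)))

/-- The signature matrix `I'_{a,n-a} = diag(I_a, −I_{n-a})`, of size `n`. -/
def Iab (R : Type*) [CommRing R] (n a : ℕ) : Matrix (Fin n) (Fin n) R :=
  Matrix.of fun p q => if p = q then (if (p : ℕ) < a then 1 else -1) else 0

/-- The signature matrix `I''_{a,n-a} = diag(I_a, −I_{n-a}, I_a, −I_{n-a})`, of size `2n`. -/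
def Ippab (R : Type*) [CommRing R] (n a : ℕ) : Matrix (Fin (2 * n)) (Fin (2 * n)) R :=
  Matrix.of fun p q => if p = q then (if (p : ℕ) % n < a then 1 else -1) else 0

/-- The unitary group `U(n)` of `n × n` complex unitary matrices. -/
abbrev UG (n : ℕ) := Matrix.unitaryGroup (Fin n) ℂ

/-- The real orthogonal group `O(n)`. -/
abbrev OG (n : ℕ) := Matrix.orthogonalGroup (Fin n) ℝ

noncomputable instance (n : ℕ) : MeasurableSpace (UG n) := borel _

noncomputable instance (n : ℕ) : MeasurableSpace (OG n) := borel _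

/-- A `2n × 2n` unitary matrix lies in the compact symplectic group `Sp(2n)`
iff `S J Sᵀ = J`. -/
def IsSymplectic {n : ℕ} (S : UG (2 * n)) : Prop :=
  (S : Matrix (Fin (2 * n)) (Fin (2 * n)) ℂ) * Jmat ℂ n
    * (S : Matrix (Fin (2 * n)) (Fin (2 * n)) ℂ)ᵀ = Jmat ℂ n

/-- The function `T^{D III}_n` on `S_{2k}`:
`σ ↦ ∑_p Δ_σ(p) ∏_{r=1}^k J_{p_{2r-1}, p_{2r}}`. -/
noncomputable def TDIII (n k : ℕ) : Equiv.Perm (Fin (2 * k)) → ℝ :=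
  fun σ => ∑ p : Fin (2 * k) → Fin (2 * n),
    DeltaO σ p * ∏ r : Fin k, Jmat ℝ n (p (lo r)) (p (hi r))

/-- The function `T^{C I}_n` on `S_{2k}`:
`σ ↦ ∑_p Δ'_σ(p) ∏_{r=1}^k (J I'_{nn})_{p_{2r-1}, p_{2r}}`. -/
noncomputable def TCI (n k : ℕ) : Equiv.Perm (Fin (2 * k)) → ℂ :=
  fun σ => ∑ p : Fin (2 * k) → Fin (2 * n),
    DeltaSp ℂ σ p * ∏ r : Fin k, (Jmat ℂ n * Iab ℂ (2 * n) n) (p (lo r)) (p (hi r))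

/-! ### Orbits and sign of a permutation -/

section Orbits
open Equiv Equiv.Perm

variable {α : Type*} [Fintype α] [DecidableEq α]

/-- The orbits of a permutation are its nontrivial cycles together with its fixed points. -/
lemma card_orbits (f : Perm α) :
    Nat.card (Quotient (SameCycle.setoid f))
      = Multiset.card f.cycleType + (Fintype.card α - #f.support) := by
  classical
  have hne : ∀ c : f.cycleFactorsFinset, ∃ x, x ∈ (c : Perm α).support := fun c =>
    (mem_cycleFactorsFinset_iff.1 c.2).1.nonempty_support
  choose pt hpt using hne
  have hcyc : ∀ c : f.cycleFactorsFinset, (c : Perm α) = f.cycleOf (pt c) := fun c =>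
    cycle_is_cycleOf (hpt c) c.2
  have hmov : ∀ c : f.cycleFactorsFinset, f (pt c) ≠ pt c := fun c =>
    mem_support.1 (mem_cycleFactorsFinset_support_le c.2 (hpt c))
  let g : f.cycleFactorsFinset ⊕ {x // x ∉ f.support} → Quotient (SameCycle.setoid f) :=
    Sum.elim (fun c => Quotient.mk _ (pt c)) (fun x => Quotient.mk _ x.1)
  have hg : Function.Bijective g := by
    constructor
    · rintro (c | x) (d | y) h
      · have h' : SameCycle f (pt c) (pt d) := Quotient.exact h
        congr 1
        apply Subtype.ext
        rw [hcyc c, hcyc d, h'.cycleOf_eq]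
      · have h' : SameCycle f (pt c) y := Quotient.exact h
        exact absurd (h'.mem_support_iff.1 (mem_support.2 (hmov c))) y.2
      · have h' : SameCycle f x (pt d) := Quotient.exact h
        exact absurd (h'.mem_support_iff.2 (mem_support.2 (hmov d))) x.2
      · have h' : SameCycle f x y := Quotient.exact h
        have hx : f x.1 = x.1 := by simpa using x.2
        congr 1
        apply Subtype.ext
        obtain ⟨i, hi⟩ := h'
        rw [← hi, zpow_apply_eq_self_of_apply_eq_self hx]
    · intro q
      induction q using Quotient.inductionOn with
      | h x =>
        by_cases hx : x ∈ f.support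
        · refine ⟨Sum.inl ⟨f.cycleOf x, cycleOf_mem_cycleFactorsFinset_iff.2 hx⟩, ?_⟩
          refine Quotient.sound ?_
          have := hpt ⟨f.cycleOf x, cycleOf_mem_cycleFactorsFinset_iff.2 hx⟩
          exact ((mem_support_cycleOf_iff.1 this).1).symm
        · exact ⟨Sum.inr ⟨x, hx⟩, rfl⟩
  rw [← Nat.card_eq_of_bijective g hg, Nat.card_sum]
  congr 1
  · simp [cycleType_def]
  · rw [Nat.card_eq_fintype_card, Fintype.card_subtype_compl, Fintype.card_coe]

lemma sign_eq_orbits (f : Perm α) :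
    (sign f : ℤ) = (-1) ^ (Fintype.card α - Nat.card (Quotient (SameCycle.setoid f))) := by
  have h1 : #f.support ≤ Fintype.card α := Finset.card_le_univ _
  have h2 : Nat.card (Quotient (SameCycle.setoid f)) ≤ Fintype.card α := by
    rw [← Nat.card_eq_fintype_card]
    exact Nat.card_le_card_of_surjective _ Quotient.mk_surjective
  have h3 := card_orbits f
  have h4 : #f.support = (Fintype.card α - Nat.card (Quotient (SameCycle.setoid f)))
      + Multiset.card f.cycleType := by omega
  rw [sign_of_cycleType, sum_cycleType, h4]
  simp [add_assoc, ← two_mul, pow_add]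

end Orbits

/-! ### Two-colouring the union of two perfect matchings -/

section Bipartite
open Equiv Equiv.Perm

variable {V : Type*} {τ ρ : Perm V}

/-- The reflection `τ` conjugates the rotation `τ * ρ` to its inverse, so it permutes the
rotation orbits. -/
lemma sameCycle_reflect (hτ : ∀ v, τ (τ v) = v) (hρ : ∀ v, ρ (ρ v) = v) {a b : V}
    (h : SameCycle (τ * ρ) a b) : SameCycle (τ * ρ) (τ a) (τ b) := by
  have hτ' : τ⁻¹ = τ := by ext v; rw [Perm.inv_eq_iff_eq, hτ]
  have hρ' : ρ⁻¹ = ρ := by ext v; rw [Perm.inv_eq_iff_eq, hρ]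
  have h2 := (sameCycle_conj (g := τ) (f := τ * ρ) (x := τ a) (y := τ b)).2
    (by rw [hτ', hτ, hτ]; exact h)
  rw [← sameCycle_inv] at h2
  convert h2 using 1
  ext v
  simp [hρ', hτ', hτ, Perm.mul_apply]

/-- In the dihedral action of two fixed-point-free involutions, `τ` moves every orbit of the
rotation `τ * ρ` to a different one: a reflection preserving a rotation orbit would fix a point. -/
lemma not_sameCycle (hτ : ∀ v, τ (τ v) = v) (hρ : ∀ v, ρ (ρ v) = v)
    (hτf : ∀ v, τ v ≠ v) (hρf : ∀ v, ρ v ≠ v) (v : V) : ¬ SameCycle (τ * ρ) v (τ v) := by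
  have hτ' : τ⁻¹ = τ := by ext v; rw [Perm.inv_eq_iff_eq, hτ]
  have hρ' : ρ⁻¹ = ρ := by ext v; rw [Perm.inv_eq_iff_eq, hρ]
  have hc : τ * (τ * ρ) * τ⁻¹ = (τ * ρ)⁻¹ := by ext v; simp [hτ', hρ', hτ]
  have hz : ∀ (j : ℤ) (w : V), ((τ * ρ) ^ (-j)) (τ w) = τ (((τ * ρ) ^ j) w) := by
    intro j w
    rw [_root_.zpow_neg, ← _root_.inv_zpow, ← hc, conj_zpow]
    simp
  -- At the midpoint of the rotation from `v` to `τ v`, one of the two reflections has a fixed point.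
  rintro ⟨m, hm⟩
  obtain ⟨j, rfl | rfl⟩ := Int.even_or_odd' m
  · apply hτf (((τ * ρ) ^ j) v)
    rw [← hz, ← hm, ← Perm.mul_apply, ← _root_.zpow_add]
    congr 2; ring
  · apply hρf (((τ * ρ) ^ j) v)
    apply τ.injective
    rw [← hz, ← hm, ← Perm.mul_apply (_ ^ _) (_ ^ _), ← _root_.zpow_add,
      ← Perm.mul_apply, ← Perm.mul_apply,
      ← _root_.zpow_one_add]
    congr 2; ring

/-- Two fixed-point-free involutions admit a common sign-alternating function. -/
lemma exists_alternating (hτ : ∀ v, τ (τ v) = v) (hρ : ∀ v, ρ (ρ v) = v)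
    (hτf : ∀ v, τ v ≠ v) (hρf : ∀ v, ρ v ≠ v) :
    ∃ χ : V → ℤˣ, (∀ v, χ (τ v) = - χ v) ∧ ∀ v, χ (ρ v) = - χ v := by
  classical
  -- Classes of `S` are the orbits under both involutions; each is the union of two rotation orbits,
  -- and `χ` is `1` on the one containing the chosen representative.
  let S : Setoid V :=
    { r := fun v w => SameCycle (τ * ρ) v w ∨ SameCycle (τ * ρ) (τ v) w
      iseqv :=
        { refl := fun v => Or.inl (SameCycle.refl _ v)
          symm := by
            rintro v w (h | h)
            · exact Or.inl h.symm
            · right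
              have := sameCycle_reflect hτ hρ h
              rw [hτ] at this
              exact this.symm
          trans := by
            rintro u v w (h | h) (h' | h')
            · exact Or.inl (h.trans h')
            · exact Or.inr ((sameCycle_reflect hτ hρ h).trans h')
            · exact Or.inr (h.trans h')
            · left
              have := sameCycle_reflect hτ hρ h
              rw [hτ] at this
              exact this.trans h' } }
  let rep : V → V := fun v => (Quotient.mk S v).out
  have hrep : ∀ v, SameCycle (τ * ρ) (rep v) v ∨ SameCycle (τ * ρ) (τ (rep v)) v := fun v =>
    Quotient.exact (s := S) (Quotient.out_eq (Quotient.mk S v))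
  have hrepeq : ∀ v w, (SameCycle (τ * ρ) v w ∨ SameCycle (τ * ρ) (τ v) w) → rep v = rep w := by
    intro v w h
    have : Quotient.mk S v = Quotient.mk S w := Quotient.sound h
    simp only [rep, this]
  let χ : V → ℤˣ := fun v => if SameCycle (τ * ρ) (rep v) v then 1 else -1
  have h1 : ∀ v, χ (τ v) = - χ v := by
    intro v
    have he : rep (τ v) = rep v := (hrepeq v (τ v) (Or.inr (SameCycle.refl _ _))).symm
    by_cases h : SameCycle (τ * ρ) (rep v) v
    · have h' : ¬ SameCycle (τ * ρ) (rep v) (τ v) := fun h' =>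
        not_sameCycle hτ hρ hτf hρf v (h.symm.trans h')
      simp [χ, he, h, h']
    · have h' : SameCycle (τ * ρ) (rep v) (τ v) := by
        have := sameCycle_reflect hτ hρ ((hrep v).resolve_left h)
        rwa [hτ] at this
      simp [χ, he, h, h']
  refine ⟨χ, h1, fun v => ?_⟩
  have hs : SameCycle (τ * ρ) v ((τ * ρ) v) := sameCycle_apply_right.2 (SameCycle.refl _ _)
  have h2 : χ ((τ * ρ) v) = χ v := by
    have he : rep ((τ * ρ) v) = rep v := (hrepeq _ _ (Or.inl hs)).symm
    simp only [χ, he]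
    congr 1
    exact propext ⟨fun h => h.trans hs.symm, fun h => h.trans hs⟩
  rw [← h2, ← h1, Perm.mul_apply, hτ]

end Bipartite

/-! ### The graph `Γ(σ)` -/

section Graph
open Equiv Equiv.Perm

variable {k : ℕ}

/-- The points of `Fin (2 * k)` as pairs (index of the edge `{2r, 2r+1}`, parity). -/
def pairEquiv (k : ℕ) : Fin k × Bool ≃ Fin (2 * k) where
  toFun x := if x.2 then hi x.1 else lo x.1
  invFun v := (⟨v / 2, by omega⟩, decide ((v : ℕ) % 2 = 1))
  left_inv := by
    rintro ⟨r, _ | _⟩ <;> ext <;> simp [lo, hi] <;> omega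
  right_inv := by
    intro v
    ext
    by_cases h : (v : ℕ) % 2 = 1 <;> simp [lo, hi, h] <;> omega

@[simp] lemma pairEquiv_false (r : Fin k) : pairEquiv k (r, false) = lo r := rfl
@[simp] lemma pairEquiv_true (r : Fin k) : pairEquiv k (r, true) = hi r := rfl
@[simp] lemma pairEquiv_symm_lo (r : Fin k) : (pairEquiv k).symm (lo r) = (r, false) := by
  rw [Equiv.symm_apply_eq]; rfl
@[simp] lemma pairEquiv_symm_hi (r : Fin k) : (pairEquiv k).symm (hi r) = (r, true) := by
  rw [Equiv.symm_apply_eq]; rfl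

lemma lo_ne_hi (r s : Fin k) : lo r ≠ hi s := by
  simp only [lo, hi, ne_eq, Fin.mk.injEq]; omega

/-- A symmetric relation holds along all edges of `Γ(σ)` iff it holds on the generating pairs. -/
lemma Gamma_forall (σ : Perm (Fin (2 * k))) {R : Fin (2 * k) → Fin (2 * k) → Prop}
    (hR : ∀ v w, R v w → R w v) :
    (∀ v w, (Gamma σ).Adj v w → R v w)
      ↔ ∀ r, R (σ (lo r)) (σ (hi r)) ∧ R (lo r) (hi r) := by
  simp only [Gamma, SimpleGraph.fromRel_adj]
  constructor
  · intro h r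
    refine ⟨h _ _ ⟨fun e => lo_ne_hi r r (σ.injective e), ?_⟩, h _ _ ⟨lo_ne_hi r r, ?_⟩⟩
    · exact Or.inl (Or.inr ⟨r, rfl, rfl⟩)
    · exact Or.inl (Or.inl ⟨r, rfl, rfl⟩)
  · rintro h v w ⟨-, (⟨r, rfl, rfl⟩ | ⟨r, rfl, rfl⟩) | (⟨r, rfl, rfl⟩ | ⟨r, rfl, rfl⟩)⟩
    · exact (h r).2
    · exact (h r).1
    · exact hR _ _ (h r).2
    · exact hR _ _ (h r).1

lemma eq_of_reachable {V X : Type*} {G : SimpleGraph V} {f : V → X}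
    (h : ∀ v w, G.Adj v w → f v = f w) {v w : V} (hvw : G.Reachable v w) : f v = f w := by
  obtain ⟨p⟩ := hvw
  induction p with
  | nil => rfl
  | cons ha _ ih => exact (h _ _ ha).trans ih

/-- `Γ(σ)` is bipartite. -/
lemma exists_coloring (σ : Perm (Fin (2 * k))) :
    ∃ χ : Fin (2 * k) → ℤˣ, ∀ v w, (Gamma σ).Adj v w → χ w = - χ v := by
  let t : Perm (Fin k × Bool) := prodCongrRight fun _ => Equiv.boolNot
  let τ : Perm (Fin (2 * k)) := (pairEquiv k).permCongr t
  have hlo : ∀ r, τ (lo r) = hi r := fun r => by simp [τ, t, Equiv.permCongr_apply]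
  have hτ : ∀ v, τ (τ v) = v := by
    intro v
    obtain ⟨⟨r, b⟩, rfl⟩ := (pairEquiv k).surjective v
    simp [τ, t, Equiv.permCongr_apply]
  have hτf : ∀ v, τ v ≠ v := by
    intro v
    obtain ⟨⟨r, b⟩, rfl⟩ := (pairEquiv k).surjective v
    simp [τ, t, Equiv.permCongr_apply]
  obtain ⟨χ, h1, h2⟩ := exists_alternating (τ := τ) (ρ := σ * τ * σ⁻¹) hτ
    (fun v => by simp [hτ]) hτf (fun v hv => hτf (σ⁻¹ v) (by
      rw [Perm.eq_inv_iff_eq]; simpa using hv))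
  refine ⟨χ, (Gamma_forall σ (fun v w h => by rw [h, neg_neg])).2 fun r => ⟨?_, ?_⟩⟩
  · rw [← h2]; simp [hlo]
  · rw [← h1, hlo]

/-! ### The sign of an alternating function -/

/-- The sign attached to a parity bit. -/
def bitSign (b : Bool) : ℤˣ := if b then -1 else 1

lemma bitSign_injective : Function.Injective bitSign := by decide

/-- The permutation of `Bool` with sign `u`. -/
def flipBit (u : ℤˣ) : Perm Bool := if u = 1 then 1 else swap false true

lemma sign_flipBit (u : ℤˣ) : sign (flipBit u) = u := by
  rcases Int.units_eq_one_or u with rfl | rfl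
  · simp [flipBit]
  · have : (-1 : ℤˣ) ≠ 1 := by decide
    simp [flipBit, this]

/-- Reorders each pair `{2r, 2r+1}` so that the point where `χ` is `1` comes first. -/
def reorder (χ : Fin (2 * k) → ℤˣ) : Perm (Fin k × Bool) :=
  prodCongrRight fun r => flipBit (χ (lo r))

lemma sign_reorder (χ : Fin (2 * k) → ℤˣ) : sign (reorder χ) = ∏ r, χ (lo r) := by
  simp [reorder, sign_prodCongrRight, sign_flipBit]

lemma reorder_fst (χ : Fin (2 * k) → ℤˣ) (x : Fin k × Bool) : (reorder χ x).1 = x.1 := rfl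

lemma apply_reorder {χ : Fin (2 * k) → ℤˣ} (h : ∀ r, χ (hi r) = - χ (lo r))
    (x : Fin k × Bool) : χ (pairEquiv k (reorder χ x)) = bitSign x.2 := by
  obtain ⟨r, b⟩ := x
  have hne : (-1 : ℤˣ) ≠ 1 := by decide
  rcases Int.units_eq_one_or (χ (lo r)) with hr | hr <;> cases b <;>
    simp [reorder, flipBit, hr, h, bitSign, hne]

/-- The value of the sign product on an alternating function `χ`. After reordering the pairs
according to `χ`, the permutation `σ` preserves the parity bit, hence splits into permutations
`f false`, `f true` of `Fin k`; the components of `Γ(σ)` are the orbits of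
`f true * (f false)⁻¹`. -/
lemma prod_coloring (σ : Perm (Fin (2 * k))) (χ : Fin (2 * k) → ℤˣ)
    (hχ : ∀ v w, (Gamma σ).Adj v w → χ w = - χ v) :
    ∏ r, χ (σ (lo r)) * χ (lo r) = (-1) ^ (k - ccount σ) * sign σ := by
  have hadj := (Gamma_forall σ (R := fun v w => χ w = - χ v)
    (fun v w h => by rw [h, neg_neg])).1 hχ
  have hcomp := (Gamma_forall σ (R := fun v w =>
    (Gamma σ).connectedComponentMk v = (Gamma σ).connectedComponentMk w)
    (fun v w h => h.symm)).1 (fun v w h => SimpleGraph.ConnectedComponent.sound h.reachable)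
  set h₁ := reorder χ with hh₁
  set h₂ := reorder (χ ∘ σ) with hh₂
  have H₁ : ∀ x, χ (pairEquiv k (h₁ x)) = bitSign x.2 := apply_reorder fun r => (hadj r).2
  have H₂ : ∀ x, χ (σ (pairEquiv k (h₂ x))) = bitSign x.2 :=
    apply_reorder (χ := χ ∘ σ) fun r => (hadj r).1
  let s : Perm (Fin k × Bool) := (pairEquiv k).symm.permCongr σ
  let σ' : Perm (Fin k × Bool) := h₁⁻¹ * s * h₂
  have hσ' : ∀ x, h₁ (σ' x) = (pairEquiv k).symm (σ (pairEquiv k (h₂ x))) := by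
    intro x
    simp [σ', s, Equiv.permCongr_apply]
  have hbit : ∀ x, (σ' x).2 = x.2 := by
    intro x
    apply bitSign_injective
    rw [← H₁, hσ', Equiv.apply_symm_apply, H₂]
  have hinj : ∀ b, Function.Injective fun r => (σ' (r, b)).1 := by
    intro b r r' h
    have : σ' (r, b) = σ' (r', b) := Prod.ext h (by rw [hbit, hbit])
    simpa using σ'.injective this
  let f : Bool → Perm (Fin k) := fun b =>
    Equiv.ofBijective _ (Finite.injective_iff_bijective.1 (hinj b))
  have hf : ∀ b r, f b r = ((pairEquiv k).symm (σ (pairEquiv k (h₂ (r, b))))).1 := by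
    intro b r
    rw [← hσ', hh₁, reorder_fst]
    rfl
  have hσf : σ' = prodCongrLeft f := by
    ext x : 1
    exact Prod.ext rfl (hbit x)
  have hsign : sign σ = (∏ r, χ (σ (lo r)) * χ (lo r)) * (sign (f true) * sign (f false)) := by
    have e1 : sign s = sign σ := sign_permCongr _ _
    have e2 : s = h₁ * σ' * h₂⁻¹ := by simp [σ', mul_assoc]
    rw [← e1, e2, Perm.sign_mul, Perm.sign_mul, sign_inv, hσf, sign_prodCongrLeft, hh₁, hh₂, sign_reorder,
      sign_reorder, Finset.prod_mul_distrib]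
    simp only [Fintype.prod_bool, Function.comp]
    ac_rfl
  let π : Perm (Fin k) := f true * (f false)⁻¹
  -- On a pair `{lo r, hi r}` the map `h₂` only permutes the two points.
  have hpt : ∀ r b, pairEquiv k (h₂ (r, b)) = lo r ∨ pairEquiv k (h₂ (r, b)) = hi r := by
    intro r b
    have h1 : (h₂ (r, b)).1 = r := reorder_fst _ _
    rcases hb : h₂ (r, b) with ⟨r', b'⟩
    rw [hb] at h1
    cases h1
    cases b'
    · exact Or.inl rfl
    · exact Or.inr rfl
  have hcard : ccount σ = Nat.card (Quotient (SameCycle.setoid π)) := by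
    let φ : Fin (2 * k) → Quotient (SameCycle.setoid π) := fun v =>
      Quotient.mk _ ((pairEquiv k).symm v).1
    have hφσ : ∀ r, φ (σ (pairEquiv k (h₂ (r, false)))) = φ (σ (pairEquiv k (h₂ (r, true)))) := by
      intro r
      refine Quotient.sound ?_
      change SameCycle π _ _
      rw [← hf, ← hf]
      refine ⟨1, ?_⟩
      simp [π]
    have hφ : ∀ v w, (Gamma σ).Adj v w → φ v = φ w := by
      refine (Gamma_forall σ (fun v w h => h.symm)).2 fun r => ⟨?_, by simp [φ]⟩
      have hne : h₂ (r, false) ≠ h₂ (r, true) := by simp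
      have := hφσ r
      rcases hpt r false with h | h <;> rcases hpt r true with h' | h' <;> rw [h, h'] at this
      · exact absurd ((pairEquiv k).injective (h.trans h'.symm)) hne
      · exact this
      · exact this.symm
      · exact absurd ((pairEquiv k).injective (h.trans h'.symm)) hne
    let Φ : (Gamma σ).ConnectedComponent → Quotient (SameCycle.setoid π) :=
      Quot.lift φ fun v w h => eq_of_reachable hφ h
    have hlo : ∀ v, (Gamma σ).connectedComponentMk (lo ((pairEquiv k).symm v).1)
        = (Gamma σ).connectedComponentMk v := by
      intro v
      obtain ⟨⟨r, b⟩, rfl⟩ := (pairEquiv k).surjective v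
      cases b
      · simp
      · simpa using (hcomp r).2
    have hf' : ∀ b r, (Gamma σ).connectedComponentMk (lo (f b r))
        = (Gamma σ).connectedComponentMk (σ (lo r)) := by
      intro b r
      rw [hf, hlo]
      rcases hpt r b with h | h <;> rw [h]
      exact (hcomp r).1.symm
    have hstep : ∀ a, (Gamma σ).connectedComponentMk (lo (π a))
        = (Gamma σ).connectedComponentMk (lo a) := by
      intro a
      obtain ⟨r, rfl⟩ := (f false).surjective a
      have : π (f false r) = f true r := by simp [π]
      rw [this, hf', hf']
    have hcyc : ∀ a b, SameCycle π a b → (Gamma σ).connectedComponentMk (lo a)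
        = (Gamma σ).connectedComponentMk (lo b) := by
      intro a b h
      obtain ⟨i, -, rfl⟩ := h.exists_pow_eq'
      clear h
      induction i with
      | zero => rfl
      | succ i ih => rw [ih, pow_succ', Perm.mul_apply, hstep]
    refine Nat.card_eq_of_bijective Φ ⟨?_, ?_⟩
    · intro C D
      induction C using SimpleGraph.ConnectedComponent.ind with | _ v =>
      induction D using SimpleGraph.ConnectedComponent.ind with | _ w =>
      intro h
      have h' : SameCycle π ((pairEquiv k).symm v).1 ((pairEquiv k).symm w).1 := Quotient.exact h
      rw [← hlo v, ← hlo w]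
      exact hcyc _ _ h'
    · intro q
      induction q using Quotient.inductionOn with
      | h r => exact ⟨(Gamma σ).connectedComponentMk (lo r), by
          change φ (lo r) = _
          simp [φ]⟩
  have hπ : sign π = (-1) ^ (k - ccount σ) := by
    have := sign_eq_orbits π
    rw [Fintype.card_fin, ← hcard] at this
    apply Units.ext
    rw [this]
    simp
  have hπ' : sign π = sign (f true) * sign (f false) := by simp [π]
  rw [← hπ, hπ', hsign, mul_left_comm, Int.units_mul_self, mul_one]

/-! ### The matrix `J` and the counting of its nonzero terms -/

variable {n : ℕ}

/-- The index `q` of the only nonzero entry in row `p` of `J`. -/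
def partner (p : Fin (2 * n)) : Fin (2 * n) :=
  if h : (p : ℕ) < n then ⟨p + n, by omega⟩ else ⟨p - n, by omega⟩

/-- The nonzero entry in row `p` of `J`. -/
def rowSign (p : Fin (2 * n)) : ℤˣ := if (p : ℕ) < n then 1 else -1

lemma partner_val (p : Fin (2 * n)) :
    (partner p : ℕ) = if (p : ℕ) < n then (p : ℕ) + n else p - n := by
  unfold partner; split_ifs <;> rfl

lemma partner_partner (p : Fin (2 * n)) : partner (partner p) = p := by
  have := p.2
  ext
  simp only [partner_val]
  split_ifs <;> omega

lemma rowSign_partner (p : Fin (2 * n)) : rowSign (partner p) = - rowSign p := by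
  have := p.2
  simp only [rowSign, partner_val]
  split_ifs <;> first | omega | simp

lemma Jmat_eq (p q : Fin (2 * n)) :
    Jmat ℂ n p q = if q = partner p then (((rowSign p : ℤˣ) : ℤ) : ℂ) else 0 := by
  have := p.2
  have := q.2
  simp only [Jmat, rowSign, Matrix.of_apply, Fin.ext_iff, partner_val]
  split_ifs <;> first | omega | simp

/-- `partner` twisted by a sign. -/
def twist (u : ℤˣ) (p : Fin (2 * n)) : Fin (2 * n) := if u = 1 then p else partner p

lemma twist_twist (u : ℤˣ) (p : Fin (2 * n)) : twist u (twist u p) = p := by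
  unfold twist; split_ifs <;> simp [partner_partner]

lemma twist_neg (u : ℤˣ) (p : Fin (2 * n)) : twist (-u) p = partner (twist u p) := by
  have hne : (-1 : ℤˣ) ≠ 1 := by decide
  rcases Int.units_eq_one_or u with rfl | rfl <;> simp [twist, hne, partner_partner]

lemma twist_partner (u : ℤˣ) (p : Fin (2 * n)) : twist u (partner p) = partner (twist u p) := by
  unfold twist; split_ifs <;> rfl

/-- The index tuples contributing to the sum are determined by one free index per component. -/
lemma card_valid (σ : Perm (Fin (2 * k))) :
    Nat.card {p : Fin (2 * k) → Fin (2 * n) // ∀ v w, (Gamma σ).Adj v w → p w = partner (p v)}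
      = (2 * n) ^ ccount σ := by
  obtain ⟨χ, hχ⟩ := exists_coloring σ
  let F : ((Gamma σ).ConnectedComponent → Fin (2 * n)) →
      {p : Fin (2 * k) → Fin (2 * n) // ∀ v w, (Gamma σ).Adj v w → p w = partner (p v)} :=
    fun g => ⟨fun v => twist (χ v) (g ((Gamma σ).connectedComponentMk v)), fun v w h => by
      dsimp only
      rw [hχ v w h, twist_neg, SimpleGraph.ConnectedComponent.sound h.reachable]⟩
  have hF : Function.Bijective F := by
    constructor
    · intro g g' h
      funext C
      induction C using SimpleGraph.ConnectedComponent.ind with | _ v =>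
      have := congrFun (congrArg Subtype.val h) v
      simpa [F, twist_twist] using congrArg (twist (χ v)) this
    · rintro ⟨p, hp⟩
      have hc : ∀ v w, (Gamma σ).Adj v w → twist (χ v) (p v) = twist (χ w) (p w) := by
        intro v w h
        rw [hχ v w h, hp v w h, twist_neg, twist_partner, partner_partner]
      refine ⟨Quot.lift (fun v => twist (χ v) (p v)) fun v w h => eq_of_reachable hc h, ?_⟩
      apply Subtype.ext
      funext v
      exact twist_twist _ _
  rw [← Nat.card_eq_of_bijective F hF, Nat.card_fun]
  simp [ccount]

end Graph

/-- `𝒯_σ(J,J) = T^{Sp}(σ; n)`, equation (2.14) of the paper. -/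
theorem stmt4 (n k : ℕ) (hn : 1 ≤ n) (hk : 1 ≤ k) (σ : Equiv.Perm (Fin (2 * k))) :
    ∑ p : Fin (2 * k) → Fin (2 * n), ∏ r : Fin k,
        Jmat ℂ n (p (σ (lo r))) (p (σ (hi r))) * Jmat ℂ n (p (lo r)) (p (hi r))
      = (-1 : ℂ) ^ (k - ccount σ) * sgn ℂ σ * (2 * (n : ℂ)) ^ ccount σ := by
  classical
  have hterm : ∀ p : Fin (2 * k) → Fin (2 * n),
      ∏ r : Fin k, Jmat ℂ n (p (σ (lo r))) (p (σ (hi r))) * Jmat ℂ n (p (lo r)) (p (hi r))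
        = if ∀ v w, (Gamma σ).Adj v w → p w = partner (p v) then
            (-1 : ℂ) ^ (k - ccount σ) * sgn ℂ σ else 0 := by
    intro p
    have hiff := Gamma_forall σ (R := fun v w => p w = partner (p v))
      (fun v w h => by rw [h, partner_partner])
    split_ifs with hp
    · have hs := prod_coloring σ (fun v => rowSign (p v)) fun v w h => by
        rw [hp v w h, rowSign_partner]
      have hs' := congrArg (fun u : ℤˣ => ((u : ℤ) : ℂ)) hs
      have hp' := hiff.1 hp
      simp only [Units.coe_prod, Units.val_mul, Int.cast_prod, Int.cast_mul] at hs'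
      simp only [Jmat_eq, (hp' _).1, (hp' _).2, if_true, hs']
      simp [sgn]
    · rw [hiff] at hp
      push Not at hp
      obtain ⟨r, hr⟩ := hp
      apply Finset.prod_eq_zero (Finset.mem_univ r)
      rw [Jmat_eq, Jmat_eq]
      by_cases h : p (σ (hi r)) = partner (p (σ (lo r)))
      · rw [if_neg (hr h), mul_zero]
      · rw [if_neg h, zero_mul]
  rw [Finset.sum_congr rfl fun p _ => hterm p, ← Finset.sum_filter, Finset.sum_const,
    nsmul_eq_mul, mul_comm]
  congr 1
  have hc := card_valid (n := n) σ
  rw [Nat.card_eq_fintype_card, Fintype.card_subtype] at hc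
  rw [hc]
  push_cast
  rfl

end WgPaper
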